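/- arXiv:1907.05965 — 3 statements merged into one kernel-verified Lean document; each statement's English description precedes it below -/
import Mathlib

section
/- Let h : ℝⁿ → ℝ be an analytic function of n real variables (analytic at every point of ℝⁿ). If h is nontrivial, i.e. there exists a point x₀ ∈ ℝⁿ with h(x₀) ≠ 0, then the zero set Z = {x ∈ ℝⁿ : h(x) = 0} has n-dimensional Lebesgue measure zero. -/
/-!
If `f` does not vanish identically on the connected set `U`, then by the identity theorem every
point of `U` has a ball `B` on which `f` is analytic and which contains a point `x₀` with
`f x₀ ≠ 0`. On each line through `x₀`, the function `f` has only countably many zeros in `B`. By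
Fubini's theorem, for almost every `t` the set of `v` with `x₀ + t • v` a zero of `f` in `B` is
null; a single `t ≠ 0` suffices, as this set is then a dilation of the zero set of `f` in `B`.
-/

open MeasureTheory Filter Topology Set

theorem countable_zeros_of_analyticOnNhd {𝕜 F : Type*} [NontriviallyNormedField 𝕜]
    [SecondCountableTopology 𝕜] [NormedAddCommGroup F] [NormedSpace 𝕜 F] {f : 𝕜 → F} {U : Set 𝕜}
    (hf : AnalyticOnNhd 𝕜 f U) (hU : IsPreconnected U) {z₀ : 𝕜} (hz₀ : z₀ ∈ U)
    (hfz₀ : f z₀ ≠ 0) : {z ∈ U | f z = 0}.Countable := by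
  have hcodisc : f ⁻¹' {0}ᶜ ∈ codiscreteWithin U :=
    hf.preimage_zero_mem_codiscreteWithin hfz₀ hz₀ ⟨⟨z₀, hz₀⟩, hU⟩
  have hdisc : IsDiscrete {z ∈ U | f z = 0} := by
    rw [← ofPred_inter_eq_sep]
    exact isDiscrete_of_codiscreteWithin hcodisc
  have := hdisc.to_subtype
  exact TopologicalSpace.separableSpace_iff_countable.mp inferInstance

section FiniteDimensional

variable {E F : Type*} [NormedAddCommGroup E] [NormedSpace ℝ E] [NormedAddCommGroup F]
  [NormedSpace ℝ F] {f : E → F} {U : Set E} {x₀ : E} [FiniteDimensional ℝ E] [MeasurableSpace E]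
  [BorelSpace E] (μ : Measure E) [μ.IsAddHaarMeasure]

theorem addHaar_eq_zero_of_ae_line_eq_zero {s : Set E} (hs : MeasurableSet s) (x₀ : E)
    (hline : ∀ᵐ v ∂μ, volume {t : ℝ | x₀ + t • v ∈ s} = 0) : μ s = 0 := by
  have hmeas : MeasurableSet {p : E × ℝ | x₀ + p.2 • p.1 ∉ s} :=
    (hs.preimage (by fun_prop : Measurable fun p : E × ℝ ↦ x₀ + p.2 • p.1)).compl
  have hline' : ∀ᵐ v ∂μ, ∀ᵐ t : ℝ, x₀ + t • v ∉ s := by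
    simpa only [ae_iff, not_not] using hline
  have hdilation : ∀ᵐ t : ℝ, ∀ᵐ v ∂μ, x₀ + t • v ∉ s := (Measure.ae_ae_comm hmeas).mp hline'
  obtain ⟨t, ht, ht₀⟩ := (hdilation.and (Measure.ae_ne volume (0 : ℝ))).exists
  have hnull : μ ((t • ·) ⁻¹' ((x₀ + ·) ⁻¹' s)) = 0 := measure_eq_zero_iff_ae_notMem.mpr ht
  rw [Measure.addHaar_preimage_smul μ ht₀, measure_preimage_add, mul_eq_zero] at hnull
  exact hnull.resolve_left (by simp [ht₀])

theorem addHaar_zeros_eq_zero_of_starConvex (hf : AnalyticOnNhd ℝ f U) (hU : StarConvex ℝ x₀ U)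
    (hUm : MeasurableSet U) (hx₀ : x₀ ∈ U) (hfx₀ : f x₀ ≠ 0) : μ {x ∈ U | f x = 0} = 0 := by
  have hmeas : MeasurableSet {x ∈ U | f x = 0} := by
    obtain ⟨u, hu, hfu⟩ := continuousOn_iff_isClosed.mp hf.continuousOn {0} isClosed_singleton
    rw [← ofPred_inter_eq_sep]
    exact hfu ▸ hu.measurableSet.inter hUm
  refine addHaar_eq_zero_of_ae_line_eq_zero μ hmeas x₀ (ae_of_all μ fun v ↦ ?_)
  let line : ℝ → E := fun t ↦ x₀ + t • v
  have hline₀ : line 0 = x₀ := by simp only [line, zero_smul, add_zero]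
  have hstar : StarConvex ℝ 0 (line ⁻¹' U) :=
    StarConvex.linear_preimage (LinearMap.toSpanSingleton ℝ E v)
      (StarConvex.preimage_add_right (by rwa [map_zero, add_zero]))
  have hmem₀ : 0 ∈ line ⁻¹' U := by rwa [mem_preimage, hline₀]
  have hanalytic : AnalyticOnNhd ℝ (f ∘ line) (line ⁻¹' U) :=
    fun t ht ↦ (hf (line t) ht).comp (by fun_prop)
  have hcountable : {t ∈ line ⁻¹' U | (f ∘ line) t = 0}.Countable :=
    countable_zeros_of_analyticOnNhd hanalytic
      (hstar.isPathConnected hmem₀).isConnected.isPreconnected hmem₀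
      (by rwa [Function.comp_apply, hline₀])
  exact hcountable.measure_zero volume

theorem analytic_zero_set_measure_zero_general (hf : AnalyticOnNhd ℝ f U) (hU : IsPreconnected U)
    (hx₀ : x₀ ∈ U) (hfx₀ : f x₀ ≠ 0) : μ {x ∈ U | f x = 0} = 0 := by
  -- Passing to the completion of `F` makes the set of points of analyticity open.
  let ι : F →L[ℝ] UniformSpace.Completion F := UniformSpace.Completion.toComplL
  let g : E → UniformSpace.Completion F := ι ∘ f
  have hg : AnalyticOnNhd ℝ g U := fun x hx ↦ (ι.analyticAt (f x)).comp (hf x hx)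
  have hzeros (x : E) : g x = 0 ↔ f x = 0 := UniformSpace.Completion.coe_eq_zero_iff
  simp only [← hzeros]
  refine measure_null_of_locally_null _ fun x hx ↦ ?_
  obtain ⟨r, hr, hball⟩ : ∃ r > 0, AnalyticOnNhd ℝ g (Metric.ball x r) :=
    (hg x hx.1).exists_ball_analyticOnNhd
  have hnhds : Metric.ball x r ∈ 𝓝 x := Metric.ball_mem_nhds x hr
  obtain ⟨y, hy, hgy⟩ : ∃ y ∈ Metric.ball x r, g y ≠ 0 := by
    by_contra! hzero
    have hgx₀ : g x₀ = 0 := hg.eqOn_zero_of_preconnected_of_eventuallyEq_zero hU hx.1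
      (eventually_of_mem hnhds hzero) hx₀
    exact hfx₀ ((hzeros x₀).mp hgx₀)
  refine ⟨{z ∈ Metric.ball x r | g z = 0}, ?_, addHaar_zeros_eq_zero_of_starConvex μ hball
    ((convex_ball x r).starConvex hy) measurableSet_ball hy hgy⟩
  filter_upwards [self_mem_nhdsWithin, mem_nhdsWithin_of_mem_nhds hnhds] with z hz hzball
  exact ⟨hzball, hz.2⟩

end FiniteDimensional

/-- If `h : ℝⁿ → ℝ` is analytic at every point of `ℝⁿ` and is not identically
zero, then its zero set has Lebesgue measure zero. -/
theorem analytic_zero_set_measure_zero (n : ℕ)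
    (h : EuclideanSpace ℝ (Fin n) → ℝ)
    (hh : ∀ x, AnalyticAt ℝ h x)
    (hnontriv : ∃ x₀, h x₀ ≠ 0) :
    MeasureTheory.volume {x : EuclideanSpace ℝ (Fin n) | h x = 0} = 0 := by
  obtain ⟨x₀, hx₀⟩ := hnontriv
  simpa only [mem_univ, true_and] using
    analytic_zero_set_measure_zero_general volume (fun x _ ↦ hh x) isPreconnected_univ
      (mem_univ x₀) hx₀
end

section
/- Let m, n ≥ 1 and K = mn. The set of pairs (P, Q) ∈ ℝ^{K×m} × ℝ^{K×n} for which the row-wise Khatri-Rao product P ⊙ Q is a singular K×K matrix (i.e., det(P ⊙ Q) = 0) has Lebesgue measure zero in ℝ^{K·m + K·n}. Equivalently, for almost every (P, Q) with respect to Lebesgue measure, P ⊙ Q is invertible. -/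
/-- The row-wise Khatri-Rao product of `P : ℝ^{K×m}` and `Q : ℝ^{K×n}`. -/
def rowKhatriRao {K m n : Type*} (P : Matrix K m ℝ) (Q : Matrix K n ℝ) :
    Matrix K (m × n) ℝ :=
  fun i jl => P i jl.1 * Q i jl.2

/-!
The determinant of a square column selection of `P ⊙ Q` is a real-analytic function of `(P, Q)`, so
it is nonzero almost everywhere as soon as it is nonzero somewhere. When row `i` is assigned the
column `(j, l)`, with distinct rows getting distinct columns, taking row `i` of `P` and `Q` to be
the standard basis vectors `e_j` and `e_l` makes the selected matrix the identity.

For the null-set statement, join each point to a point where the function is nonzero: on every such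
line the zeros are isolated, so by Fubini almost every homothety centred at that point carries
almost every point to a nonzero of the function. A single nondegenerate homothety of this kind
suffices, since it preserves null sets.
-/

open MeasureTheory
open scoped ContDiff Kronecker

section AnalyticZeros

variable {E F : Type*} [NormedAddCommGroup E] [NormedSpace ℝ E]
  [NormedAddCommGroup F] [NormedSpace ℝ F]

theorem ae_ne_zero_of_analyticOnNhd_real (ν : Measure ℝ) [NullSingletonClass ν] {f : ℝ → F}
    (hf : AnalyticOnNhd ℝ f Set.univ) {t₀ : ℝ} (ht₀ : f t₀ ≠ 0) : ∀ᵐ t ∂ν, f t ≠ 0 := by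
  have hcodiscrete : ∀ᶠ t in Filter.codiscreteWithin Set.univ, f t ≠ 0 :=
    hf.preimage_zero_mem_codiscreteWithin ht₀ (Set.mem_univ t₀) isConnected_univ
  rw [← Measure.restrict_univ (μ := ν)]
  exact ae_restrict_le_codiscreteWithin MeasurableSet.univ hcodiscrete

theorem analyticOnNhd_comp_homothety {f : E → F} (hf : AnalyticOnNhd ℝ f Set.univ) (x₀ x : E) :
    AnalyticOnNhd ℝ (fun t : ℝ => f (AffineMap.homothety x₀ t x)) Set.univ := by
  refine hf.comp (fun t _ => ?_) (Set.mapsTo_univ _ _)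
  simp only [AffineMap.homothety_apply, vsub_eq_sub, vadd_eq_add]
  fun_prop

variable [FiniteDimensional ℝ E] [MeasurableSpace E] [BorelSpace E]
  (μ : Measure E) [μ.IsAddHaarMeasure]

theorem ae_of_ae_homothety {p : E → Prop} (x₀ : E) {t : ℝ} (ht : t ≠ 0)
    (h : ∀ᵐ x ∂μ, p (AffineMap.homothety x₀ t x)) : ∀ᵐ x ∂μ, p x := by
  have hsurj : Function.Surjective (AffineMap.homothety x₀ t) :=
    (AffineEquiv.homothetyUnitsMulHom x₀ (Units.mk0 t ht)).surjective
  have himage : AffineMap.homothety x₀ t '' {x | ¬p (AffineMap.homothety x₀ t x)} = {x | ¬p x} :=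
    Set.image_preimage_eq {x | ¬p x} hsurj
  rw [ae_iff] at h ⊢
  rw [← himage, Measure.addHaar_image_homothety, h, mul_zero]

theorem ae_ne_zero_of_analyticOnNhd {f : E → F} (hf : AnalyticOnNhd ℝ f Set.univ) {x₀ : E}
    (hx₀ : f x₀ ≠ 0) : ∀ᵐ x ∂μ, f x ≠ 0 := by
  have hlines : ∀ᵐ x ∂μ, ∀ᵐ t : ℝ, f (AffineMap.homothety x₀ t x) ≠ 0 :=
    .of_forall fun x => ae_ne_zero_of_analyticOnNhd_real volume
      (analyticOnNhd_comp_homothety hf x₀ x) (t₀ := 0) (by simpa using hx₀)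
  have hopen : IsOpen {z : E × ℝ | f (AffineMap.homothety x₀ z.2 z.1) ≠ 0} := by
    have hcont : Continuous f := continuousOn_univ.mp hf.continuousOn
    simp only [AffineMap.homothety_apply, vsub_eq_sub, vadd_eq_add]
    exact isOpen_ne_fun (by fun_prop) continuous_const
  have hhomotheties : ∀ᵐ t : ℝ, ∀ᵐ x ∂μ, f (AffineMap.homothety x₀ t x) ≠ 0 :=
    (Measure.ae_ae_comm hopen.measurableSet).mp hlines
  obtain ⟨t, ht, ht_ne⟩ := (hhomotheties.and (Measure.ae_ne volume 0)).exists
  exact ae_of_ae_homothety μ x₀ ht_ne ht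

end AnalyticZeros

theorem analyticAt_matrix_det {𝕜 E A κ : Type*} [NontriviallyNormedField 𝕜] [NormedAddCommGroup E]
    [NormedSpace 𝕜 E] [NormedCommRing A] [NormedAlgebra 𝕜 A] [Fintype κ] [DecidableEq κ]
    {M : E → Matrix κ κ A} {x : E} (hM : ∀ i j, AnalyticAt 𝕜 (fun y => M y i j) x) :
    AnalyticAt 𝕜 (fun y => (M y).det) x := by
  simp only [Matrix.det_apply']
  exact Finset.analyticAt_fun_sum _ fun σ _ => analyticAt_const.mul <|
    Finset.analyticAt_fun_prod _ fun i _ => hM (σ i) i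

section RowKhatriRao

theorem rowKhatriRao_submatrix_eq_kronecker_submatrix {K m n m' n' : Type*}
    (A : Matrix m' m ℝ) (B : Matrix n' n ℝ) (f : K → m') (g : K → n') :
    rowKhatriRao (A.submatrix f id) (B.submatrix g id) =
      (A ⊗ₖ B).submatrix (fun i => (f i, g i)) id :=
  rfl

theorem rowKhatriRao_one_submatrix_eq_one {K m n : Type*} [DecidableEq K] [DecidableEq m]
    [DecidableEq n] {e : K → m × n} (he : Function.Injective e) :
    (rowKhatriRao ((1 : Matrix m m ℝ).submatrix (fun i => (e i).1) id)
      ((1 : Matrix n n ℝ).submatrix (fun i => (e i).2) id)).submatrix id e = 1 := by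
  rw [rowKhatriRao_submatrix_eq_kronecker_submatrix, Matrix.one_kronecker_one,
    Matrix.submatrix_submatrix]
  exact Matrix.submatrix_one e he

variable {K m n : Type*} [Fintype K] [Fintype m] [Fintype n]

theorem analyticOnNhd_det_rowKhatriRao_submatrix [DecidableEq K] (e : K → m × n) :
    AnalyticOnNhd ℝ (fun pq : (K → m → ℝ) × (K → n → ℝ) =>
      ((rowKhatriRao (Matrix.of pq.1) (Matrix.of pq.2)).submatrix id e).det) Set.univ := by
  intro pq _
  refine analyticAt_matrix_det fun i k => ?_
  have hP : ContDiff ℝ ω fun pq : (K → m → ℝ) × (K → n → ℝ) => pq.1 i (e k).1 := by fun_prop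
  have hQ : ContDiff ℝ ω fun pq : (K → m → ℝ) × (K → n → ℝ) => pq.2 i (e k).2 := by fun_prop
  exact hP.contDiffAt.analyticAt.mul hQ.contDiffAt.analyticAt

instance isAddHaarMeasure_volume_pi_prod_pi :
    (volume : Measure ((K → m → ℝ) × (K → n → ℝ))).IsAddHaarMeasure := by
  have : (volume : Measure (K → m → ℝ)).IsAddHaarMeasure := Measure.pi.isAddHaarMeasure _
  have : (volume : Measure (K → n → ℝ)).IsAddHaarMeasure := Measure.pi.isAddHaarMeasure _
  exact Measure.prod.instIsAddHaarMeasure _ _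

end RowKhatriRao

theorem rowKhatriRao_singular_measure_zero_general {K m n : Type*} [Fintype K] [DecidableEq K]
    [Finite m] [Finite n] (μ : Measure ((K → m → ℝ) × (K → n → ℝ))) [μ.IsAddHaarMeasure]
    {e : K → m × n} (he : Function.Injective e) :
    μ {pq | ((rowKhatriRao (Matrix.of pq.1) (Matrix.of pq.2)).submatrix id e).det = 0} = 0 ∧
      ∀ᵐ pq ∂μ, IsUnit ((rowKhatriRao (Matrix.of pq.1) (Matrix.of pq.2)).submatrix id e) := by
  classical
  have := Fintype.ofFinite m
  have := Fintype.ofFinite n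
  let P₀ : Matrix K m ℝ := (1 : Matrix m m ℝ).submatrix (fun i => (e i).1) id
  let Q₀ : Matrix K n ℝ := (1 : Matrix n n ℝ).submatrix (fun i => (e i).2) id
  have hdet₀ : ((rowKhatriRao P₀ Q₀).submatrix id e).det ≠ 0 := by
    simp [P₀, Q₀, rowKhatriRao_one_submatrix_eq_one he]
  have hdet : ∀ᵐ pq ∂μ,
      ((rowKhatriRao (Matrix.of pq.1) (Matrix.of pq.2)).submatrix id e).det ≠ 0 :=
    ae_ne_zero_of_analyticOnNhd μ (analyticOnNhd_det_rowKhatriRao_submatrix e)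
      (x₀ := (P₀, Q₀)) hdet₀
  refine ⟨measure_eq_zero_iff_ae_notMem.mpr hdet, ?_⟩
  filter_upwards [hdet] with pq hpq
  exact (Matrix.isUnit_iff_isUnit_det _).mpr hpq.isUnit

/-- For `K = mn`, the set of pairs `(P, Q)` for which the square matrix
`P ⊙ Q` is singular has Lebesgue measure zero; equivalently, `P ⊙ Q` is
invertible for almost every `(P, Q)`. -/
theorem rowKhatriRao_singular_measure_zero (m n : ℕ) (hm : 1 ≤ m) (hn : 1 ≤ n) :
    MeasureTheory.volume
        {pq : (Fin (m * n) → Fin m → ℝ) × (Fin (m * n) → Fin n → ℝ) |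
          ((rowKhatriRao (Matrix.of pq.1) (Matrix.of pq.2)).submatrix id
              (⇑finProdFinEquiv.symm)).det = 0}
      = 0 ∧
    ∀ᵐ pq : (Fin (m * n) → Fin m → ℝ) × (Fin (m * n) → Fin n → ℝ)
        ∂MeasureTheory.volume,
      IsUnit ((rowKhatriRao (Matrix.of pq.1) (Matrix.of pq.2)).submatrix id
          (⇑finProdFinEquiv.symm)) := by
  exact rowKhatriRao_singular_measure_zero_general volume (e := finProdFinEquiv.symm)
    finProdFinEquiv.symm.injective
end

section
/- Let m, n ≥ 1, K = mn, and let μ be a probability measure on ℝ that is absolutely continuous with respect to Lebesgue measure. Consider the random matrices P ∈ ℝ^{K×m} and Q ∈ ℝ^{K×n} whose K·m + K·n entries are i.i.d. with common law μ, i.e., the joint law of all entries is the product measure ⊗μ on ℝ^{K·m+K·n}. Then with probability 1, the row-wise Khatri-Rao product P ⊙ Q is an invertible K×K matrix. -/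
open MeasureTheory

/-!
The determinant of `P ⊙ Q` is a polynomial in the entries of `P` and `Q`. It is not the zero
polynomial: if the `(j, l)`-th row of `P` is the unit vector `e_j` and that of `Q` is `e_l`, then
`P ⊙ Q` is the Kronecker product of two identity matrices. An absolutely continuous measure has no
atoms, and the zero set of a nonzero polynomial is null for every product of σ-finite measures
without atoms: by Fubini's theorem and induction, for almost all values of the other variables the
leading coefficient in the first one does not vanish, so that only finitely many roots remain.
-/

section AlmostEverywhere

variable {R : Type*} [CommRing R] [MeasurableSpace R]

theorem measurable_mvPolynomial_eval [MeasurableAdd₂ R] [MeasurableMul₂ R] {σ : Type*}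
    (p : MvPolynomial σ R) : Measurable fun x : σ → R => MvPolynomial.eval x p := by
  simp only [MvPolynomial.eval_eq]
  fun_prop

variable [IsDomain R]

theorem polynomial_ae_eval_ne_zero (μ : Measure R) [NullSingletonClass μ]
    {p : Polynomial R} (hp : p ≠ 0) : ∀ᵐ t ∂μ, p.eval t ≠ 0 := by
  simpa [ae_iff, Polynomial.IsRoot] using (Polynomial.finite_setOfPred_isRoot hp).measure_zero μ

theorem ae_ae_eval_cons_ne_zero {k : ℕ} (μ : Measure R) [NullSingletonClass μ]
    {ν : Measure (Fin k → R)} {p : MvPolynomial (Fin (k + 1)) R}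
    (hlead : ∀ᵐ y ∂ν, MvPolynomial.eval y (MvPolynomial.finSuccEquiv R k p).leadingCoeff ≠ 0) :
    ∀ᵐ y ∂ν, ∀ᵐ t ∂μ, MvPolynomial.eval (Fin.cons t y : Fin (k + 1) → R) p ≠ 0 := by
  filter_upwards [hlead] with y hy
  have hmap : (MvPolynomial.finSuccEquiv R k p).map (MvPolynomial.eval y) ≠ 0 :=
    fun h => hy (by rw [← Polynomial.coeff_natDegree, ← Polynomial.coeff_map, h,
      Polynomial.coeff_zero])
  simpa only [MvPolynomial.eval_eq_eval_mv_eval'] using polynomial_ae_eval_ne_zero μ hmap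

variable [MeasurableAdd₂ R] [MeasurableMul₂ R] [MeasurableSingletonClass R]

theorem mvPolynomial_ae_eval_ne_zero_fin {k : ℕ} (μ : Fin k → Measure R)
    [∀ i, SigmaFinite (μ i)] [∀ i, NullSingletonClass (μ i)]
    {p : MvPolynomial (Fin k) R} (hp : p ≠ 0) :
    ∀ᵐ x ∂Measure.pi μ, MvPolynomial.eval x p ≠ 0 := by
  induction k with
  | zero =>
    rw [p.eq_C_of_isEmpty] at hp ⊢
    exact .of_forall fun x => by simpa using hp
  | succ k ih =>
    have hlead : (MvPolynomial.finSuccEquiv R k p).leadingCoeff ≠ 0 := by simpa using hp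
    have hcons : Measurable fun z : R × (Fin k → R) => (Fin.cons z.1 z.2 : Fin (k + 1) → R) :=
      measurable_pi_lambda _ (Fin.cases measurable_fst fun i =>
        (measurable_pi_apply i).comp measurable_snd)
    have hmeas : MeasurableSet
        {z : R × (Fin k → R) | MvPolynomial.eval (Fin.cons z.1 z.2 : Fin (k + 1) → R) p ≠ 0} :=
      ((measurable_mvPolynomial_eval p).comp hcons) (measurableSet_singleton 0).compl
    have hprod : ∀ᵐ z ∂(μ 0).prod (Measure.pi fun j : Fin k => μ j.succ),
        MvPolynomial.eval (Fin.cons z.1 z.2 : Fin (k + 1) → R) p ≠ 0 := by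
      rw [Measure.ae_prod_iff_ae_ae hmeas, Measure.ae_ae_comm hmeas]
      exact ae_ae_eval_cons_ne_zero (μ 0) (ih (fun j => μ j.succ) hlead)
    have hsplit := (measurePreserving_piFinSuccAbove μ 0).quasiMeasurePreserving
    filter_upwards [hsplit.ae hprod] with x hx
    rwa [← Fin.cons_self_tail x]

theorem mvPolynomial_ae_eval_ne_zero {ι : Type*} [Fintype ι] (μ : ι → Measure R)
    [∀ i, SigmaFinite (μ i)] [∀ i, NullSingletonClass (μ i)]
    {p : MvPolynomial ι R} (hp : p ≠ 0) :
    ∀ᵐ x ∂Measure.pi μ, MvPolynomial.eval x p ≠ 0 := by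
  let e := (Fintype.equivFin ι).symm
  obtain ⟨q, rfl⟩ := (MvPolynomial.renameEquiv R e).surjective p
  have hq : q ≠ 0 := by rintro rfl; exact hp (map_zero _)
  rw [← (measurePreserving_piCongrLeft μ e).map_eq,
    (MeasurableEquiv.measurableEmbedding _).ae_map_iff]
  filter_upwards [mvPolynomial_ae_eval_ne_zero_fin (fun i => μ (e i)) hq] with x hx
  rw [MvPolynomial.renameEquiv_apply, MvPolynomial.eval_rename]
  convert hx
  exact funext (MeasurableEquiv.piCongrLeft_apply_apply (β := fun _ => R) e x)

end AlmostEverywhere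

theorem ae_isUnit_map_eval_of_isUnit {F ι K : Type*} [Field F] [MeasurableSpace F]
    [MeasurableAdd₂ F] [MeasurableMul₂ F] [MeasurableSingletonClass F]
    [Fintype ι] [Fintype K] [DecidableEq K]
    (μ : ι → Measure F) [∀ i, SigmaFinite (μ i)] [∀ i, NullSingletonClass (μ i)]
    {M : Matrix K K (MvPolynomial ι F)} {x₀ : ι → F}
    (hx₀ : IsUnit (M.map (MvPolynomial.eval x₀))) :
    ∀ᵐ x ∂Measure.pi μ, IsUnit (M.map (MvPolynomial.eval x)) := by
  have isUnit_iff (x : ι → F) :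
      IsUnit (M.map (MvPolynomial.eval x)) ↔ MvPolynomial.eval x M.det ≠ 0 := by
    rw [Matrix.isUnit_iff_isUnit_det, isUnit_iff_ne_zero, RingHom.map_det, RingHom.mapMatrix_apply]
  have hdet : M.det ≠ 0 := fun h => (isUnit_iff x₀).1 hx₀ (by rw [h, map_zero])
  simpa only [isUnit_iff] using mvPolynomial_ae_eval_ne_zero μ hdet

section RowKhatriRao

variable {K m n : Type*}

theorem rowKhatriRao_one_submatrix [DecidableEq m] [DecidableEq n] (f : K → m × n) :
    rowKhatriRao ((1 : Matrix m m ℝ).submatrix (fun i => (f i).1) id)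
        ((1 : Matrix n n ℝ).submatrix (fun i => (f i).2) id) =
      (1 : Matrix (m × n) (m × n) ℝ).submatrix f id := by
  rw [← Matrix.one_kronecker_one]
  rfl

variable (K m n) in
/-- The row-wise Khatri-Rao product of two matrices whose entries are independent indeterminates;
`Sum.inl` indexes the entries of the left factor and `Sum.inr` those of the right factor. -/
noncomputable def genericRowKhatriRao :
    Matrix K (m × n) (MvPolynomial ((K × m) ⊕ (K × n)) ℝ) :=
  Matrix.of fun i jl => MvPolynomial.X (Sum.inl (i, jl.1)) * MvPolynomial.X (Sum.inr (i, jl.2))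

theorem genericRowKhatriRao_map_eval (x : (K × m) ⊕ (K × n) → ℝ) :
    (genericRowKhatriRao K m n).map (MvPolynomial.eval x) =
      rowKhatriRao (Matrix.of fun i j => x (Sum.inl (i, j)))
        (Matrix.of fun i l => x (Sum.inr (i, l))) := by
  ext i jl
  simp [genericRowKhatriRao, rowKhatriRao]

variable [Fintype K] [DecidableEq K]

theorem exists_isUnit_genericRowKhatriRao_map_eval (e : m × n ≃ K) :
    ∃ x, IsUnit (((genericRowKhatriRao K m n).submatrix id e.symm).map (MvPolynomial.eval x)) := by
  classical
  let P : Matrix K m ℝ := (1 : Matrix m m ℝ).submatrix (fun i => (e.symm i).1) id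
  let Q : Matrix K n ℝ := (1 : Matrix n n ℝ).submatrix (fun i => (e.symm i).2) id
  refine ⟨Sum.elim (fun a => P a.1 a.2) (fun a => Q a.1 a.2), ?_⟩
  have hPQ : (rowKhatriRao P Q).submatrix id e.symm = 1 := by
    rw [rowKhatriRao_one_submatrix, Matrix.submatrix_submatrix]
    exact Matrix.submatrix_one_equiv e.symm
  rw [← Matrix.submatrix_map, genericRowKhatriRao_map_eval]
  exact hPQ ▸ isUnit_one

theorem rowKhatriRao_ae_invertible_general [Fintype m] [Fintype n] (e : m × n ≃ K)
    (μ : (K × m) ⊕ (K × n) → Measure ℝ) [∀ a, SigmaFinite (μ a)]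
    [∀ a, NullSingletonClass (μ a)] :
    ∀ᵐ x ∂Measure.pi μ,
      IsUnit
        ((rowKhatriRao
            (Matrix.of fun i j => x (Sum.inl (i, j)))
            (Matrix.of fun i l => x (Sum.inr (i, l)))).submatrix id e.symm) := by
  obtain ⟨x₀, hx₀⟩ := exists_isUnit_genericRowKhatriRao_map_eval e
  simpa only [← Matrix.submatrix_map, genericRowKhatriRao_map_eval] using
    ae_isUnit_map_eval_of_isUnit μ hx₀

end RowKhatriRao

/-- If the `Km + Kn` entries of `P` and `Q` are i.i.d. with a common law `μ`
absolutely continuous w.r.t. Lebesgue measure, then with probability 1 the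
row-wise Khatri-Rao product `P ⊙ Q` (for `K = mn`) is invertible. -/
theorem rowKhatriRao_ae_invertible (m n : ℕ) (hm : 1 ≤ m) (hn : 1 ≤ n)
    (μ : Measure ℝ) [IsProbabilityMeasure μ] (hμ : μ ≪ volume) :
    ∀ᵐ x : ((Fin (m * n) × Fin m) ⊕ (Fin (m * n) × Fin n)) → ℝ
        ∂(Measure.pi fun _ => μ),
      IsUnit
        ((rowKhatriRao
            (Matrix.of fun i j => x (Sum.inl (i, j)))
            (Matrix.of fun i l => x (Sum.inr (i, l)))).submatrix id
          (⇑finProdFinEquiv.symm)) := by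
  have : NullSingletonClass μ := ⟨fun a => hμ (measure_singleton a)⟩
  exact rowKhatriRao_ae_invertible_general finProdFinEquiv fun _ => μ
end
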